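/- arXiv:2512.23121 — 2 statements merged into one kernel-verified Lean document; each statement's English description precedes it below -/
import Mathlib

section
/- Let k ≥ 2 and let c > 0 be a real number such that every rectangle cover of the matching compatibility matrix M_k has size at least c. Then every rectangle (P₁, P₂) of M_k satisfies |P₁|·|P₂| ≤ k!·(k−1)!·2k·ln k / c. -/
/-!
The pairs `(ρ₁, ρ₂)` with `ρ₂ * ρ₁` a `k`-cycle form a set `E` of size `N = k! (k-1)!`, on which
`S_k × S_k` acts by `(a, b) • (x, y) = (a x b⁻¹, b y a⁻¹)`: this conjugates `y x` by `b`. The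
action sends rectangles to rectangles of the same size, and it is transitive on `E` because
permutations of the same cycle type are conjugate. Hence the translates of a fixed rectangle of
size `s` cover every point of `E` equally often, so by averaging some translate always covers at
least a fraction `s / N` of what is still uncovered (`exists_large_inter`). Choosing translates
greedily, after `t` steps at most `N (1 - s/N) ^ t ≤ N exp (-s t / N)` pairs remain, which is less
than `1` for `t = ⌊(N / s) log N⌋ + 1`. Therefore `c ≤ t ≤ (N / s) (log N + 1)`, and the bound
follows from `log N + 1 ≤ 2 k log k`.
-/

/-- A rectangle of the matching compatibility matrix `M_k`: a pair of nonempty sets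
`P₁, P₂ ⊆ S_k` such that `ρ₂ ∘ ρ₁` is a single `k`-cycle for all `ρ₁ ∈ P₁, ρ₂ ∈ P₂`. -/
def IsRect (k : ℕ) (P₁ P₂ : Finset (Equiv.Perm (Fin k))) : Prop :=
  P₁.Nonempty ∧ P₂.Nonempty ∧
    ∀ ρ₁ ∈ P₁, ∀ ρ₂ ∈ P₂, (ρ₂ * ρ₁).cycleType = ({k} : Multiset ℕ)

/-- A rectangle cover of `M_k`: a family of rectangles covering every pair
`(ρ₁, ρ₂)` with `ρ₂ ∘ ρ₁` a single `k`-cycle. Its size is its cardinality. -/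
def IsRectCover (k : ℕ)
    (R : Finset (Finset (Equiv.Perm (Fin k)) × Finset (Equiv.Perm (Fin k)))) : Prop :=
  (∀ r ∈ R, IsRect k r.1 r.2) ∧
    ∀ ρ₁ ρ₂ : Equiv.Perm (Fin k), (ρ₂ * ρ₁).cycleType = ({k} : Multiset ℕ) →
      ∃ r ∈ R, ρ₁ ∈ r.1 ∧ ρ₂ ∈ r.2

open Finset in
/-- Averaging: if the sets `A i ⊆ E` all have size `s` and cover each point of `E` equally often,
then some `A i` contains at least a fraction `s / |E|` of a given `U ⊆ E`. -/
lemma exists_large_inter {ι X : Type*} [Fintype ι] [Nonempty ι] [DecidableEq X]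
    (E : Finset X) (A : ι → Finset X) (s d : ℕ) (hA : ∀ i, A i ⊆ E) (hs : ∀ i, #(A i) = s)
    (hd : ∀ x ∈ E, #{i | x ∈ A i} = d) (U : Finset X) (hU : U ⊆ E) :
    ∃ i, #U * s ≤ #(U ∩ A i) * #E := by
  have key : ∀ V ⊆ E, ∑ i, #(V ∩ A i) = #V * d := by
    intro V hV
    have h := sum_card_bipartiteAbove_eq_sum_card_bipartiteBelow (s := V)
      (t := (univ : Finset ι)) (fun x i => x ∈ A i)
    simp only [bipartiteAbove, bipartiteBelow, filter_mem_eq_inter] at h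
    rw [← h, sum_congr rfl (fun x hx => hd x (hV hx)), sum_const, smul_eq_mul]
  have hE : Fintype.card ι * s = #E * d := by
    rw [← key E Subset.rfl]
    simp [inter_eq_right.2 (hA _), hs]
  by_contra! h
  have hlt : ∑ i, #(U ∩ A i) * #E < ∑ _i : ι, #U * s :=
    sum_lt_sum_of_nonempty univ_nonempty fun i _ => h i
  rw [← sum_mul, key U hU, sum_const, smul_eq_mul, card_univ] at hlt
  nlinarith [congrArg (#U * ·) hE]

open Finset in
/-- Greedy covering: `t` of the sets `A i` leave at most `|E| (1 - s / |E|) ^ t` points of `E`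
uncovered. -/
lemma exists_greedy_cover {ι X : Type*} [Fintype ι] [Nonempty ι] [DecidableEq ι] [DecidableEq X]
    (E : Finset X) (A : ι → Finset X) (s d : ℕ) (hA : ∀ i, A i ⊆ E) (hs : ∀ i, #(A i) = s)
    (hd : ∀ x ∈ E, #{i | x ∈ A i} = d) (hE : E.Nonempty) (t : ℕ) :
    ∃ T : Finset ι, #T ≤ t ∧
      (#(E \ T.biUnion A) : ℝ) ≤ #E * (1 - (s : ℝ) / #E) ^ t := by
  have hE0 : (0 : ℝ) < #E := by exact_mod_cast hE.card_pos
  have hsE : (s : ℝ) ≤ #E := by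
    obtain ⟨i⟩ := ‹Nonempty ι›
    exact_mod_cast hs i ▸ card_le_card (hA i)
  induction t with
  | zero => exact ⟨∅, by simp⟩
  | succ t ih =>
    obtain ⟨T, hT, hU⟩ := ih
    obtain ⟨i, hi⟩ := exists_large_inter E A s d hA hs hd (E \ T.biUnion A) sdiff_subset
    set U := E \ T.biUnion A with hUdef
    refine ⟨insert i T, (card_insert_le _ _).trans (by omega), ?_⟩
    have hrest : E \ (insert i T).biUnion A = U \ A i := by
      ext x
      simp only [hUdef, mem_sdiff, mem_biUnion, mem_insert]
      grind
    have hcard : (#(U \ A i) : ℝ) + #(U ∩ A i) = #U := by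
      exact_mod_cast card_sdiff_add_card_inter U (A i)
    have hi' : (#U : ℝ) * s / #E ≤ #(U ∩ A i) := by
      rw [div_le_iff₀ hE0]; exact_mod_cast hi
    have hfrac : 0 ≤ 1 - (s : ℝ) / #E := by
      rw [sub_nonneg, div_le_one hE0]; exact hsE
    rw [hrest, pow_succ, ← mul_assoc]
    calc (#(U \ A i) : ℝ) ≤ #U * (1 - (s : ℝ) / #E) := by
          have : (#U : ℝ) * (1 - (s : ℝ) / #E) = #U - #U * s / #E := by ring
          linarith
      _ ≤ _ := by gcongr

open Finset in
/-- The pairs `(ρ₁, ρ₂)` with `ρ₂ * ρ₁` a single `k`-cycle. -/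
def cyclePairs (k : ℕ) : Finset (Equiv.Perm (Fin k) × Equiv.Perm (Fin k)) :=
  {p | (p.2 * p.1).cycleType = ({k} : Multiset ℕ)}

open Finset in
lemma card_cyclePairs (k : ℕ) (hk : 2 ≤ k) :
    #(cyclePairs k) = k.factorial * (k - 1).factorial := by
  have h1 : #((univ : Finset (Equiv.Perm (Fin k))) ×ˢ
      ({g | g.cycleType = {k}} : Finset (Equiv.Perm (Fin k)))) =
      k.factorial * (k - 1).factorial := by
    rw [card_product, Equiv.Perm.card_of_cycleType_singleton hk (by simp)]
    simp [Fintype.card_perm]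
  rw [← h1]
  refine card_bij' (fun p _ => (p.1, p.2 * p.1)) (fun p _ => (p.1, p.2 * p.1⁻¹)) ?_ ?_ ?_ ?_
    <;> simp [cyclePairs]

open Finset in
/-- The image of the pair of sets `(P₁, P₂)` under `(x, y) ↦ (a x b⁻¹, b y a⁻¹)`, `g = (a, b)`. -/
def rectTranslate {k : ℕ} (P₁ P₂ : Finset (Equiv.Perm (Fin k)))
    (g : Equiv.Perm (Fin k) × Equiv.Perm (Fin k)) :
    Finset (Equiv.Perm (Fin k)) × Finset (Equiv.Perm (Fin k)) :=
  (P₁.image fun x => g.1 * x * g.2⁻¹, P₂.image fun y => g.2 * y * g.1⁻¹)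

lemma mem_rectTranslate_fst {k : ℕ} (P₁ P₂ : Finset (Equiv.Perm (Fin k)))
    (g : Equiv.Perm (Fin k) × Equiv.Perm (Fin k)) (x : Equiv.Perm (Fin k)) :
    x ∈ (rectTranslate P₁ P₂ g).1 ↔ g.1⁻¹ * x * g.2 ∈ P₁ := by
  simp only [rectTranslate, Finset.mem_image]
  constructor
  · rintro ⟨y, hy, rfl⟩
    simpa [mul_assoc] using hy
  · exact fun h => ⟨_, h, by group⟩

lemma mem_rectTranslate_snd {k : ℕ} (P₁ P₂ : Finset (Equiv.Perm (Fin k)))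
    (g : Equiv.Perm (Fin k) × Equiv.Perm (Fin k)) (x : Equiv.Perm (Fin k)) :
    x ∈ (rectTranslate P₁ P₂ g).2 ↔ g.2⁻¹ * x * g.1 ∈ P₂ := by
  simp only [rectTranslate, Finset.mem_image]
  constructor
  · rintro ⟨y, hy, rfl⟩
    simpa [mul_assoc] using hy
  · exact fun h => ⟨_, h, by group⟩

lemma isRect_rectTranslate {k : ℕ} {P₁ P₂ : Finset (Equiv.Perm (Fin k))} (h : IsRect k P₁ P₂)
    (g : Equiv.Perm (Fin k) × Equiv.Perm (Fin k)) :
    IsRect k (rectTranslate P₁ P₂ g).1 (rectTranslate P₁ P₂ g).2 := by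
  obtain ⟨h1, h2, h3⟩ := h
  refine ⟨h1.image _, h2.image _, ?_⟩
  simp only [rectTranslate, Finset.forall_mem_image]
  intro x hx y hy
  rw [← h3 x hx y hy, ← Equiv.Perm.cycleType_conj (σ := y * x) (τ := g.2)]
  congr 1
  group

lemma card_rectTranslate {k : ℕ} (P₁ P₂ : Finset (Equiv.Perm (Fin k)))
    (g : Equiv.Perm (Fin k) × Equiv.Perm (Fin k)) :
    ((rectTranslate P₁ P₂ g).1 ×ˢ (rectTranslate P₁ P₂ g).2).card = P₁.card * P₂.card := by
  rw [Finset.card_product, rectTranslate, Finset.card_image_of_injective,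
    Finset.card_image_of_injective]
  · intro x y h; simpa using h
  · intro x y h; simpa using h

open Finset in
/-- By transitivity on `cyclePairs k`, any two of its points lie in equally many translates. -/
lemma card_translates_mem {k : ℕ} (P₁ P₂ : Finset (Equiv.Perm (Fin k)))
    (p q : Equiv.Perm (Fin k) × Equiv.Perm (Fin k)) (hp : p ∈ cyclePairs k)
    (hq : q ∈ cyclePairs k) :
    #{g | p ∈ (rectTranslate P₁ P₂ g).1 ×ˢ (rectTranslate P₁ P₂ g).2} =
      #{g | q ∈ (rectTranslate P₁ P₂ g).1 ×ˢ (rectTranslate P₁ P₂ g).2} := by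
  obtain ⟨x, y⟩ := p
  obtain ⟨z, w⟩ := q
  simp only [cyclePairs, mem_filter, mem_univ, true_and] at hp hq
  obtain ⟨b, hb⟩ := isConj_iff.1 (Equiv.Perm.isConj_of_cycleType_eq (hp.trans hq.symm))
  -- `(a, b)` with `a = z b x⁻¹` maps `(x, y)` to `(z, w)`.
  obtain ⟨a, hz⟩ : ∃ a, z = a * x * b⁻¹ := ⟨z * b * x⁻¹, by group⟩
  have hw : w = b * y * a⁻¹ := by
    have : w = b * (y * x) * b⁻¹ * z⁻¹ := by rw [hb]; group
    rw [this, hz]; group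
  refine card_bij' (fun g _ => (a * g.1, b * g.2)) (fun g _ => (a⁻¹ * g.1, b⁻¹ * g.2)) ?_ ?_ ?_ ?_
  · intro g hg
    simp only [mem_filter, mem_univ, true_and, mem_product, mem_rectTranslate_fst,
      mem_rectTranslate_snd] at hg ⊢
    subst hz hw
    simpa [mul_assoc] using hg
  · intro g hg
    simp only [mem_filter, mem_univ, true_and, mem_product, mem_rectTranslate_fst,
      mem_rectTranslate_snd] at hg ⊢
    subst hz hw
    simpa [mul_assoc] using hg
  · simp
  · simp

lemma factorial_succ_le (m : ℕ) : (m + 1).factorial ≤ (m + 2) ^ m := by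
  induction m with
  | zero => simp
  | succ m ih =>
    calc (m + 2).factorial = (m + 2) * (m + 1).factorial := Nat.factorial_succ _
      _ ≤ (m + 2) * (m + 2) ^ m := by gcongr
      _ = (m + 2) ^ (m + 1) := by ring
      _ ≤ (m + 1 + 2) ^ (m + 1) := by gcongr; omega

lemma log_factorial_bound (k : ℕ) (hk : 2 ≤ k) :
    Real.log ((k.factorial * (k - 1).factorial : ℕ) : ℝ) + 1 ≤ 2 * k * Real.log k := by
  obtain ⟨m, rfl⟩ := Nat.exists_eq_add_of_le' hk
  have hN : (m + 2).factorial * (m + 2 - 1).factorial * 4 ≤ (m + 2) ^ (2 * (m + 2)) := by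
    calc (m + 2).factorial * (m + 2 - 1).factorial * 4
        = (m + 2) * (m + 1).factorial * (m + 1).factorial * 4 := by
          rw [Nat.factorial_succ (m + 1)]; rfl
      _ ≤ (m + 2) * (m + 2) ^ m * (m + 2) ^ m * ((m + 2) ^ 3) := by
          gcongr
          · exact factorial_succ_le m
          · exact factorial_succ_le m
          · calc 4 ≤ 2 ^ 3 := by norm_num
              _ ≤ (m + 2) ^ 3 := by gcongr
      _ = (m + 2) ^ (2 * (m + 2)) := by ring
  have hpos : (0 : ℝ) < (((m + 2).factorial * (m + 2 - 1).factorial : ℕ) : ℝ) := by positivity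
  rw [← Real.log_exp 1, ← Real.log_mul hpos.ne' (Real.exp_pos 1).ne']
  have : 2 * ((m + 2 : ℕ) : ℝ) * Real.log ((m + 2 : ℕ) : ℝ) =
      Real.log (((m + 2 : ℕ) : ℝ) ^ (2 * (m + 2))) := by
    rw [Real.log_pow]; push_cast; ring
  rw [this]
  refine Real.log_le_log (mul_pos hpos (Real.exp_pos 1)) ?_
  calc _ ≤ (((m + 2).factorial * (m + 2 - 1).factorial : ℕ) : ℝ) * 4 := by
        gcongr; linarith [Real.exp_one_lt_three]
    _ ≤ _ := by exact_mod_cast hN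

/-- Let `k ≥ 2` and `c > 0` be such that every rectangle cover of `M_k`
has size at least `c`. Then every rectangle `(P₁, P₂)` of `M_k` satisfies
`|P₁|·|P₂| ≤ k!·(k-1)!·2k·ln k / c`. -/
theorem stmt_5 (k : ℕ) (hk : 2 ≤ k) (c : ℝ) (hc : 0 < c)
    (hcov : ∀ R, IsRectCover k R → c ≤ (R.card : ℝ))
    (P₁ P₂ : Finset (Equiv.Perm (Fin k))) (hR : IsRect k P₁ P₂) :
    ((P₁.card : ℝ) * (P₂.card : ℝ)) ≤
      ((k.factorial : ℝ) * ((k - 1).factorial : ℝ) * (2 * k) * Real.log k) / c := by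
  classical
  obtain ⟨x₀, hx₀⟩ := hR.1
  obtain ⟨y₀, hy₀⟩ := hR.2.1
  have hp₀ : (x₀, y₀) ∈ cyclePairs k := by
    simpa [cyclePairs] using hR.2.2 x₀ hx₀ y₀ hy₀
  let A := fun g : Equiv.Perm (Fin k) × Equiv.Perm (Fin k) =>
    (rectTranslate P₁ P₂ g).1 ×ˢ (rectTranslate P₁ P₂ g).2
  have hA : ∀ g, A g ⊆ cyclePairs k := by
    rintro g ⟨x, y⟩ h
    have h := Finset.mem_product.1 h
    simpa [cyclePairs] using (isRect_rectTranslate hR g).2.2 x h.1 y h.2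
  set s := P₁.card * P₂.card with hs
  have hs0 : (0 : ℝ) < s := by
    exact_mod_cast Nat.mul_pos hR.1.card_pos hR.2.1.card_pos
  have hsN : s ≤ (cyclePairs k).card :=
    (card_rectTranslate P₁ P₂ 1).symm.le.trans (Finset.card_le_card (hA 1))
  set N := (cyclePairs k).card with hN
  have hsN' : (s : ℝ) ≤ N := by exact_mod_cast hsN
  have hN0 : (0 : ℝ) < N := hs0.trans_le hsN'
  have hlogN : 0 ≤ Real.log N := Real.log_natCast_nonneg N
  let t := ⌊(N / s : ℝ) * Real.log N⌋₊ + 1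
  obtain ⟨T, hT, hU⟩ := exists_greedy_cover (cyclePairs k) A s _ hA (card_rectTranslate P₁ P₂)
    (fun p hp => card_translates_mem P₁ P₂ p _ hp hp₀) ⟨_, hp₀⟩ t
  have hempty : cyclePairs k \ T.biUnion A = ∅ := by
    rw [← Finset.card_eq_zero]
    have ht : (N / s : ℝ) * Real.log N < t := by
      simpa [t] using Nat.lt_floor_add_one ((N / s : ℝ) * Real.log N)
    have ht' : Real.log N + -(s / N : ℝ) * t < 0 := by
      have := mul_lt_mul_of_pos_left ht (div_pos hs0 hN0)
      have h2 : (s / N : ℝ) * ((N / s : ℝ) * Real.log N) = Real.log N := by field_simp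
      linarith
    have hfrac : 0 ≤ 1 - (s : ℝ) / N := by
      rw [sub_nonneg, div_le_one hN0]; exact hsN'
    have : ((cyclePairs k \ T.biUnion A).card : ℝ) < 1 := by
      calc _ ≤ (N : ℝ) * (1 - (s : ℝ) / N) ^ t := hU
        _ ≤ (N : ℝ) * Real.exp (-(s / N : ℝ)) ^ t := by
          gcongr; exact Real.one_sub_le_exp_neg _
        _ = Real.exp (Real.log N + -(s / N : ℝ) * t) := by
          rw [Real.exp_add, Real.exp_log hN0, ← Real.exp_nat_mul, mul_comm (t : ℝ)]
        _ < 1 := by simpa using ht'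
    exact Nat.lt_one_iff.1 (by exact_mod_cast this)
  have hcover : IsRectCover k (T.image (rectTranslate P₁ P₂)) := by
    refine ⟨?_, fun x y hxy => ?_⟩
    · simp only [Finset.forall_mem_image]
      exact fun g _ => isRect_rectTranslate hR g
    · have hmem : (x, y) ∈ T.biUnion A :=
        Finset.sdiff_eq_empty_iff_subset.1 hempty (by simpa [cyclePairs] using hxy)
      obtain ⟨g, hg, h⟩ := Finset.mem_biUnion.1 hmem
      exact ⟨_, Finset.mem_image_of_mem _ hg, Finset.mem_product.1 h⟩
  have hct : c ≤ t := (hcov _ hcover).trans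
    (by exact_mod_cast Finset.card_image_le.trans hT)
  have htle : (t : ℝ) ≤ (N / s : ℝ) * Real.log N + 1 := by
    simpa [t] using Nat.floor_le (mul_nonneg (div_pos hN0 hs0).le hlogN)
  have hbound := log_factorial_bound k hk
  rw [← card_cyclePairs k hk, ← hN] at hbound
  rw [le_div_iff₀ hc]
  calc (P₁.card : ℝ) * P₂.card * c = s * c := by rw [hs]; push_cast; ring
    _ ≤ s * ((N / s : ℝ) * Real.log N + 1) := by gcongr; exact hct.trans htle
    _ = N * Real.log N + s := by field_simp
    _ ≤ N * (Real.log N + 1) := by linarith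
    _ ≤ N * (2 * k * Real.log k) := by gcongr
    _ = _ := by rw [hN, card_cyclePairs k hk]; push_cast; ring
end

section
/- Let k ≥ 1, let A·B be a rectangle in the graph G_k, and let I₁ ≠ I₂ be two useful sets belonging to the same side of the rectangle (both in A or both in B). Then there exist i ∈ [k] and j ∈ {0,…,2q−1} such that the vertex v_{i,j} belongs to exactly one of I₁, I₂. -/
/-!
Suppose `I₁`, `I₂` are useful sets on the same side that agree on all literal vertices, with
`I₂ ∪ C = I_ρ` for some `C` on the other side, and let `w_l ∈ I₁`. If `w_l ∉ I₂`, then `w_l ∉ I_ρ`,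
since `w_l ∈ C` would contradict the disjointness of `I₁` and `C`. So `ρ` satisfies the `l`-th
clause, which puts a literal vertex adjacent to `w_l` into `I_ρ = I₂ ∪ C`. That vertex is not in
`C`, because `I₁` and `C` are non-adjacent; hence it is in `I₂`, hence in `I₁`, contradicting the
independence of `I₁`. Therefore `I₁` and `I₂` agree on clause vertices too (`clause_mem_of_agree`),
so they are equal.
-/

/-- A 2-CNF clause on `k` variables: an ordered pair of variables `a < b` together
with negation flags `na`, `nb`. There are `q = 4·C(k,2) = 2k(k-1)` such clauses. -/
structure ClauseT (k : ℕ) where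
  a : Fin k
  b : Fin k
  na : Bool
  nb : Bool
  hab : a < b

/-- The column index `2(l-1) + n` of the copy of a literal associated with the `l`-th
clause (`l` zero-indexed here), with negation flag `n`. -/
def litIdx (q : ℕ) (l : Fin q) (neg : Bool) : Fin (2 * q) :=
  ⟨2 * l.val + (if neg then 1 else 0), by have := l.isLt; split <;> omega⟩

/-- Vertices of the graph `G_k`: the literal vertices `v_{i,j}` (`i ∈ [k]`,
`j ∈ {0,…,2q-1}`) and the clause vertices `w_l` (`l ∈ [q]`). -/
abbrev Vtx (k q : ℕ) := (Fin k × Fin (2 * q)) ⊕ Fin q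

/-- Adjacency in `G_k`, for a given enumeration `w` of all 2-clauses:
(i) `v_{i,j-1} ~ v_{i,j}`; (ii) `w_l` is adjacent exactly to
`v_{a_l, 2(l-1)+na_l}` and `v_{b_l, 2(l-1)+nb_l}`. -/
def GAdj {k q : ℕ} (w : Fin q → ClauseT k) : Vtx k q → Vtx k q → Prop :=
  fun x y => match x, y with
  | Sum.inl (i, j), Sum.inl (i', j') =>
      i = i' ∧ (j.val + 1 = j'.val ∨ j'.val + 1 = j.val)
  | Sum.inl (i, j), Sum.inr l =>
      (i = (w l).a ∧ j = litIdx q l (w l).na) ∨ (i = (w l).b ∧ j = litIdx q l (w l).nb)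
  | Sum.inr l, Sum.inl (i, j) =>
      (i = (w l).a ∧ j = litIdx q l (w l).na) ∨ (i = (w l).b ∧ j = litIdx q l (w l).nb)
  | Sum.inr _, Sum.inr _ => False

/-- Independent sets of `G_k`. -/
def IndepSet {k q : ℕ} (w : Fin q → ClauseT k) (S : Set (Vtx k q)) : Prop :=
  ∀ u ∈ S, ∀ v ∈ S, ¬ GAdj w u v

/-- The canonical solution `I_ρ` for an assignment `ρ : [k] → {0,1}`: all literal
vertices `v_{i,j}` with `j ≡ ρ(i) (mod 2)`, together with all clause vertices `w_l`
whose clause is not satisfied by `ρ` (i.e. `ρ(a_l) ≠ na_l` and `ρ(b_l) ≠ nb_l`). -/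
def canonical {k q : ℕ} (w : Fin q → ClauseT k) (ρ : Fin k → Bool) : Set (Vtx k q) :=
  fun x => match x with
  | Sum.inl (i, j) => j.val % 2 = (if ρ i then 1 else 0)
  | Sum.inr l => ρ (w l).a ≠ (w l).na ∧ ρ (w l).b ≠ (w l).nb

/-- A rectangle `𝒜·ℬ` in `G_k`: two families of independent sets of `G_k` such that
every `A ∈ 𝒜` and `B ∈ ℬ` are disjoint and non-adjacent. -/
def IsRectangle {k q : ℕ} (w : Fin q → ClauseT k)
    (𝒜 ℬ : Set (Set (Vtx k q))) : Prop :=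
  (∀ A ∈ 𝒜, IndepSet w A) ∧ (∀ B ∈ ℬ, IndepSet w B) ∧
    ∀ A ∈ 𝒜, ∀ B ∈ ℬ, Disjoint A B ∧ ∀ u ∈ A, ∀ v ∈ B, ¬ GAdj w u v

/-- `A` is a useful set of the side `𝒜`: `A ∈ 𝒜` and `A ∪ B` is a canonical solution
for some `B ∈ ℬ`. -/
def UsefulA {k q : ℕ} (w : Fin q → ClauseT k) (𝒜 ℬ : Set (Set (Vtx k q)))
    (A : Set (Vtx k q)) : Prop :=
  A ∈ 𝒜 ∧ ∃ B ∈ ℬ, ∃ ρ : Fin k → Bool, A ∪ B = canonical w ρ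

/-- `B` is a useful set of the side `ℬ`. -/
def UsefulB {k q : ℕ} (w : Fin q → ClauseT k) (𝒜 ℬ : Set (Set (Vtx k q)))
    (B : Set (Vtx k q)) : Prop :=
  B ∈ ℬ ∧ ∃ A ∈ 𝒜, ∃ ρ : Fin k → Bool, A ∪ B = canonical w ρ

/-- The `litIdx` copy of a literal in variable `i` made true by `ρ` lies in `I_ρ`. -/
lemma lit_mem_canonical {k q : ℕ} (w : Fin q → ClauseT k) (ρ : Fin k → Bool) (l : Fin q)
    (i : Fin k) (n : Bool) (h : ρ i = n) :
    (Sum.inl (i, litIdx q l n) : Vtx k q) ∈ canonical w ρ := by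
  change (litIdx q l n).val % 2 = if ρ i then 1 else 0
  subst h
  cases h : ρ i <;> simp [litIdx]

/-- `C` plays the role of a set on the opposite side that completes `I₂` to a canonical solution;
only its interaction with `I₁` matters. -/
lemma clause_mem_of_agree {k q : ℕ} {w : Fin q → ClauseT k} {I₁ I₂ C : Set (Vtx k q)}
    {ρ : Fin k → Bool} (hind : IndepSet w I₁) (hdisj : Disjoint I₁ C)
    (hadj : ∀ u ∈ I₁, ∀ v ∈ C, ¬ GAdj w u v) (hC : I₂ ∪ C = canonical w ρ)
    (hlit : ∀ i j, (Sum.inl (i, j) : Vtx k q) ∈ I₂ → (Sum.inl (i, j) : Vtx k q) ∈ I₁)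
    {l : Fin q} (hl : (Sum.inr l : Vtx k q) ∈ I₁) : (Sum.inr l : Vtx k q) ∈ I₂ := by
  -- A literal of the clause that `ρ` makes true would give a neighbour of `w_l` in `I₁ ∪ C`.
  have key : ∀ i n, GAdj w (Sum.inr l) (Sum.inl (i, litIdx q l n)) → ρ i ≠ n := by
    intro i n hg hn
    have hm := lit_mem_canonical w ρ l i n hn
    rw [← hC] at hm
    rcases hm with hm | hm
    · exact hind _ hl _ (hlit _ _ hm) hg
    · exact hadj _ hl _ hm hg
  have hm : (Sum.inr l : Vtx k q) ∈ canonical w ρ :=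
    ⟨key _ _ (Or.inl ⟨rfl, rfl⟩), key _ _ (Or.inr ⟨rfl, rfl⟩)⟩
  rw [← hC] at hm
  exact hm.resolve_right (Set.disjoint_left.mp hdisj hl)

lemma gAdj_symm {k q : ℕ} {w : Fin q → ClauseT k} {x y : Vtx k q} (h : GAdj w x y) :
    GAdj w y x := by
  rcases x with ⟨i, j⟩ | l <;> rcases y with ⟨i', j'⟩ | l'
  · exact ⟨h.1.symm, h.2.symm⟩
  · exact h
  · exact h
  · exact h

/-- Let `k ≥ 1`, let `𝒜·ℬ` be a rectangle in `G_k` (with `q = 2k(k-1)`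
and `w` a bijective enumeration of all 2-clauses), and let `I₁ ≠ I₂` be two useful
sets belonging to the same side of the rectangle. Then some literal vertex `v_{i,j}`
belongs to exactly one of `I₁, I₂`. -/
theorem stmt_15 (k q : ℕ) (hk : 1 ≤ k) (hq : q = 2 * k * (k - 1))
    (w : Fin q → ClauseT k) (hw : Function.Bijective w)
    (𝒜 ℬ : Set (Set (Vtx k q))) (hrect : IsRectangle w 𝒜 ℬ)
    (I₁ I₂ : Set (Vtx k q)) (hne : I₁ ≠ I₂)
    (hside : (UsefulA w 𝒜 ℬ I₁ ∧ UsefulA w 𝒜 ℬ I₂) ∨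
             (UsefulB w 𝒜 ℬ I₁ ∧ UsefulB w 𝒜 ℬ I₂)) :
    ∃ (i : Fin k) (j : Fin (2 * q)),
      Xor' (Sum.inl (i, j) ∈ I₁) (Sum.inl (i, j) ∈ I₂) := by
  obtain ⟨hA, hB, hAB⟩ := hrect
  by_contra hcon
  have hlit : ∀ i j, (Sum.inl (i, j) : Vtx k q) ∈ I₁ ↔ (Sum.inl (i, j) : Vtx k q) ∈ I₂ := by
    intro i j
    by_contra h
    exact hcon ⟨i, j, (xor_iff_not_iff _ _).mpr h⟩
  refine hne (Set.ext ?_)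
  rintro (⟨i, j⟩ | l)
  · exact hlit i j
  · rcases hside with ⟨⟨h₁, C₁, hC₁, ρ₁, e₁⟩, ⟨h₂, C₂, hC₂, ρ₂, e₂⟩⟩ |
      ⟨⟨h₁, C₁, hC₁, ρ₁, e₁⟩, ⟨h₂, C₂, hC₂, ρ₂, e₂⟩⟩
    · exact ⟨clause_mem_of_agree (hA _ h₁) (hAB _ h₁ _ hC₂).1 (hAB _ h₁ _ hC₂).2 e₂
          fun i j => (hlit i j).mpr,
        clause_mem_of_agree (hA _ h₂) (hAB _ h₂ _ hC₁).1 (hAB _ h₂ _ hC₁).2 e₁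
          fun i j => (hlit i j).mp⟩
    · rw [Set.union_comm] at e₁ e₂
      exact ⟨clause_mem_of_agree (hB _ h₁) (hAB _ hC₂ _ h₁).1.symm
          (fun u hu v hv hg => (hAB _ hC₂ _ h₁).2 v hv u hu (gAdj_symm hg)) e₂
          fun i j => (hlit i j).mpr,
        clause_mem_of_agree (hB _ h₂) (hAB _ hC₁ _ h₂).1.symm
          (fun u hu v hv hg => (hAB _ hC₁ _ h₂).2 v hv u hu (gAdj_symm hg)) e₁
          fun i j => (hlit i j).mp⟩
end
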